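/- Let n ≥ 1, ε ∈ (0,1), δ ∈ (0,1), Δ ≥ 0, and σ : Fin n → ℝ with σ_ℓ > 0 for all ℓ and min_ℓ σ_ℓ ≥ Δ·√(2·ln(1.25/δ))/ε. Let ν be the product measure on ℝⁿ whose ℓ-th factor is gaussianReal 0 (σ_ℓ²). Then for any a, a' ∈ ℝⁿ with ‖a − a'‖₂ ≤ Δ and any measurable set s ⊆ ℝⁿ, the translated measures satisfy (ν mapped by x ↦ a + x)(s) ≤ e^ε · (ν mapped by x ↦ a' + x)(s) + δ. (Multivariate Gaussian mechanism with per-coordinate noise levels: the output distributions on adjacent inputs of L₂-sensitivity Δ are (ε,δ)-indistinguishable.) -/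

import Mathlib

open MeasureTheory ProbabilityTheory Real

/-!
Write `P` and `P'` for the two output laws. The privacy loss `log (dP/dP')` is an affine function
of the output, so under `P` it is Gaussian, with law `N(d² / 2, d²)` where `d` is the distance of
the two inputs in units of the noise. Splitting an event according to whether the loss exceeds `ε`
bounds its `P`-probability by `exp ε` times its `P'`-probability plus the probability that
`N(d² / 2, d²)` exceeds `ε`. The calibration says `d * √(2 * log (1.25 / δ)) ≤ ε`, which makes that
tail at most `δ`.
-/

open scoped ENNReal NNReal

section WithDensity

variable {α : Type*} [MeasurableSpace α] {ν : Measure α} {s : Set α}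

lemma withDensity_apply_le_mul_of_le {f : α → ℝ≥0∞} {c : ℝ≥0∞} (hs : MeasurableSet s)
    (hf : ∀ x ∈ s, f x ≤ c) : ν.withDensity f s ≤ c * ν s := by
  rw [withDensity_apply _ hs, ← setLIntegral_const]
  exact setLIntegral_mono measurable_const hf

lemma withDensity_exp_apply_le {f : α → ℝ} (hf : Measurable f) (ε : ℝ) (hs : MeasurableSet s) :
    ν.withDensity (fun x => .ofReal (exp (f x))) s ≤ .ofReal (exp ε) * ν s
      + (ν.withDensity fun x => .ofReal (exp (f x))).map f (Set.Ioi ε) := by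
  have hB : MeasurableSet (f ⁻¹' Set.Ioi ε) := hf measurableSet_Ioi
  have low_loss : ν.withDensity (fun x => .ofReal (exp (f x))) (s \ f ⁻¹' Set.Ioi ε)
      ≤ .ofReal (exp ε) * ν (s \ f ⁻¹' Set.Ioi ε) :=
    withDensity_apply_le_mul_of_le (hs.diff hB) fun x hx =>
      ENNReal.ofReal_le_ofReal (exp_le_exp.2 (not_lt.1 hx.2))
  rw [Measure.map_apply hf measurableSet_Ioi]
  refine (measure_le_inter_add_sdiff _ s (f ⁻¹' Set.Ioi ε)).trans ?_
  rw [add_comm]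
  gcongr
  · exact low_loss.trans (by gcongr; exact Set.sdiff_subset)
  · exact Set.inter_subset_right

end WithDensity

section PiWithDensity

variable {ι : Type*} [Fintype ι] {α : ι → Type*}

lemma indicator_univ_pi_prod_apply (s : ∀ i, Set (α i)) (f : ∀ i, α i → ℝ≥0∞) (x : ∀ i, α i) :
    (Set.univ.pi s).indicator (fun x => ∏ i, f i (x i)) x
      = ∏ i, (s i).indicator (f i) (x i) := by
  by_cases hx : x ∈ Set.univ.pi s
  · rw [Set.indicator_of_mem hx]
    exact Finset.prod_congr rfl fun i _ =>
      (Set.indicator_of_mem (hx i (Set.mem_univ i)) _).symm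
  · obtain ⟨i, hi⟩ : ∃ i, x i ∉ s i := by simpa using hx
    rw [Set.indicator_of_notMem hx,
      Finset.prod_eq_zero (Finset.mem_univ i) (Set.indicator_of_notMem hi _)]

variable [∀ i, MeasurableSpace (α i)] (μ : ∀ i, Measure (α i)) [∀ i, IsProbabilityMeasure (μ i)]
  {f : ∀ i, α i → ℝ≥0∞}

lemma lintegral_pi_prod (hf : ∀ i, Measurable (f i)) :
    ∫⁻ x, ∏ i, f i (x i) ∂Measure.pi μ = ∏ i, ∫⁻ x, f i x ∂μ i := by
  rw [lintegral_prod_eq_prod_lintegral_of_indepFun Finset.univ (fun i (x : ∀ i, α i) => f i (x i))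
    (iIndepFun_pi fun i => (hf i).aemeasurable) fun i => (hf i).comp (measurable_pi_apply i)]
  exact Finset.prod_congr rfl fun i _ => (measurePreserving_eval μ i).lintegral_comp (hf i)

lemma pi_withDensity (hf : ∀ i, Measurable (f i)) [∀ i, SigmaFinite ((μ i).withDensity (f i))] :
    Measure.pi (fun i => (μ i).withDensity (f i))
      = (Measure.pi μ).withDensity fun x => ∏ i, f i (x i) := by
  refine Measure.pi_eq fun s hs => ?_
  have hs_pi : MeasurableSet (Set.univ.pi s) := .univ_pi hs
  rw [withDensity_apply _ hs_pi, ← lintegral_indicator hs_pi]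
  simp_rw [indicator_univ_pi_prod_apply]
  rw [lintegral_pi_prod μ fun i => (hf i).indicator (hs i)]
  exact Finset.prod_congr rfl fun i _ => by
    rw [lintegral_indicator (hs i), withDensity_apply _ (hs i)]

end PiWithDensity

section PiGaussian

variable {ι : Type*} [Fintype ι]

lemma map_const_add_pi_gaussianReal (a m : ι → ℝ) (v : ι → ℝ≥0) :
    (Measure.pi fun i => gaussianReal (m i) (v i)).map (fun x => a + x)
      = Measure.pi fun i => gaussianReal (m i + a i) (v i) :=
  (measurePreserving_pi _ _ fun i =>
    ⟨measurable_const_add (a i), gaussianReal_map_const_add (a i)⟩).map_eq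

lemma map_sum_pi_gaussianReal (m : ι → ℝ) (v : ι → ℝ≥0) :
    (Measure.pi fun i => gaussianReal (m i) (v i)).map (fun x => ∑ i, x i)
      = gaussianReal (∑ i, m i) (∑ i, v i) := by
  have : IsProbabilityMeasure
      ((Measure.pi fun i => gaussianReal (m i) (v i)).map fun x => ∑ i, x i) :=
    Measure.isProbabilityMeasure_map (by fun_prop)
  refine Measure.ext_of_charFun (funext fun t => ?_)
  rw [charFun_map_sum_pi_eq_prod, Finset.prod_apply]
  simp only [charFun_gaussianReal, ← Complex.exp_sum]
  push_cast
  rw [Finset.sum_sub_distrib, ← Finset.sum_div, ← Finset.sum_mul, ← Finset.sum_mul,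
    ← Finset.mul_sum]

end PiGaussian

section PrivacyLoss

/-- The privacy loss at the output `x` of a Gaussian mechanism with noise variance `v` that
distinguishes the mean `m` from the mean `m'`: the logarithm of the density of `gaussianReal m v`
with respect to `gaussianReal m' v`. For independent coordinates the losses add up. Meaningful only
for `v ≠ 0`. -/
noncomputable def gaussianPrivacyLoss (v : ℝ≥0) (m m' x : ℝ) : ℝ :=
  ((x - m') ^ 2 - (x - m) ^ 2) / (2 * v)

/-- The Mahalanobis distance of `m` and `m'` for the diagonal covariance matrix with entries `v`:
the Euclidean distance measured coordinatewise in standard deviations of the noise. It is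
`ℝ≥0`-valued so that its square can serve as a variance. Coordinates with `v i = 0` are ignored. -/
noncomputable def mahalanobisDist {ι : Type*} [Fintype ι] (v : ι → ℝ≥0) (m m' : ι → ℝ) : ℝ≥0 :=
  NNReal.sqrt (∑ i, ‖m i - m' i‖₊ ^ 2 / v i)

lemma measurable_gaussianPrivacyLoss (v : ℝ≥0) (m m' : ℝ) :
    Measurable (gaussianPrivacyLoss v m m') := by
  unfold gaussianPrivacyLoss
  fun_prop

lemma gaussianReal_eq_withDensity_gaussianReal (m m' : ℝ) {v : ℝ≥0} (hv : v ≠ 0) :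
    gaussianReal m v
      = (gaussianReal m' v).withDensity fun x => .ofReal (exp (gaussianPrivacyLoss v m m' x)) := by
  rw [gaussianReal_of_var_ne_zero _ hv, gaussianReal_of_var_ne_zero _ hv,
    ← withDensity_mul _ (by fun_prop) (measurable_gaussianPrivacyLoss v m m').exp.ennreal_ofReal]
  congr 1 with x
  rw [Pi.mul_apply, gaussianPDF, gaussianPDF, ← ENNReal.ofReal_mul (gaussianPDFReal_nonneg _ _ _),
    gaussianPDFReal, gaussianPDFReal, gaussianPrivacyLoss, mul_assoc _ (exp _), ← exp_add]
  congr 3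
  ring

lemma map_gaussianPrivacyLoss_gaussianReal (m m' : ℝ) {v : ℝ≥0} (hv : v ≠ 0) :
    (gaussianReal m v).map (gaussianPrivacyLoss v m m')
      = gaussianReal ((m - m') ^ 2 / v / 2) (‖m - m'‖₊ ^ 2 / v) := by
  have hv' : (v : ℝ) ≠ 0 := NNReal.coe_ne_zero.2 hv
  have affine : gaussianPrivacyLoss v m m'
      = (fun y => y + (m' ^ 2 - m ^ 2) / (2 * v)) ∘ fun x => (m - m') / v * x := by
    ext x
    simp only [gaussianPrivacyLoss, Function.comp_apply]
    field_simp
    ring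
  rw [affine, ← Measure.map_map (by fun_prop) (by fun_prop), gaussianReal_map_const_mul,
    gaussianReal_map_add_const]
  congr 1
  · field_simp
    ring
  · ext
    push_cast
    rw [norm_eq_abs, sq_abs]
    field_simp

variable {ι : Type*} [Fintype ι] {v : ι → ℝ≥0}

lemma pi_gaussianReal_eq_withDensity_pi_gaussianReal (m m' : ι → ℝ) (hv : ∀ i, v i ≠ 0) :
    Measure.pi (fun i => gaussianReal (m i) (v i))
      = (Measure.pi fun i => gaussianReal (m' i) (v i)).withDensity fun x =>
          .ofReal (exp (∑ i, gaussianPrivacyLoss (v i) (m i) (m' i) (x i))) := by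
  have density i := gaussianReal_eq_withDensity_gaussianReal (m i) (m' i) (hv i)
  have sigmaFinite i : SigmaFinite ((gaussianReal (m' i) (v i)).withDensity fun x =>
      .ofReal (exp (gaussianPrivacyLoss (v i) (m i) (m' i) x))) :=
    density i ▸ inferInstance
  simp_rw [exp_sum, ENNReal.ofReal_prod_of_nonneg fun _ _ => exp_nonneg _]
  rw [← pi_withDensity _ fun _ => (measurable_gaussianPrivacyLoss _ _ _).exp.ennreal_ofReal]
  exact congrArg _ (funext density)

lemma coe_mahalanobisDist_sq (v : ι → ℝ≥0) (m m' : ι → ℝ) :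
    (mahalanobisDist v m m' : ℝ) ^ 2 = ∑ i, (m i - m' i) ^ 2 / v i := by
  rw [mahalanobisDist, ← NNReal.coe_pow, NNReal.sq_sqrt]
  simp

lemma map_sum_gaussianPrivacyLoss_pi_gaussianReal (m m' : ι → ℝ) (hv : ∀ i, v i ≠ 0) :
    (Measure.pi fun i => gaussianReal (m i) (v i)).map
        (fun x => ∑ i, gaussianPrivacyLoss (v i) (m i) (m' i) (x i))
      = gaussianReal (mahalanobisDist v m m' ^ 2 / 2) (mahalanobisDist v m m' ^ 2) := by
  have coordinatewise := measurePreserving_pi (fun i => gaussianReal (m i) (v i)) _ fun i =>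
    ⟨measurable_gaussianPrivacyLoss (v i) (m i) (m' i),
      map_gaussianPrivacyLoss_gaussianReal (m i) (m' i) (hv i)⟩
  change Measure.map ((fun y : ι → ℝ => ∑ i, y i) ∘
    fun (x : ι → ℝ) i => gaussianPrivacyLoss (v i) (m i) (m' i) (x i)) _ = _
  rw [← Measure.map_map (by fun_prop) coordinatewise.measurable, coordinatewise.map_eq,
    map_sum_pi_gaussianReal, coe_mahalanobisDist_sq, mahalanobisDist, NNReal.sq_sqrt,
    Finset.sum_div]

lemma pi_gaussianReal_apply_le (m m' : ι → ℝ) (hv : ∀ i, v i ≠ 0) (ε : ℝ) {s : Set (ι → ℝ)}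
    (hs : MeasurableSet s) :
    Measure.pi (fun i => gaussianReal (m i) (v i)) s
      ≤ .ofReal (exp ε) * Measure.pi (fun i => gaussianReal (m' i) (v i)) s
        + gaussianReal (mahalanobisDist v m m' ^ 2 / 2) (mahalanobisDist v m m' ^ 2)
            (Set.Ioi ε) := by
  have measurable_loss :
      Measurable fun x : ι → ℝ => ∑ i, gaussianPrivacyLoss (v i) (m i) (m' i) (x i) :=
    Finset.measurable_fun_sum _ fun i _ =>
      (measurable_gaussianPrivacyLoss _ _ _).comp (measurable_pi_apply i)
  rw [← map_sum_gaussianPrivacyLoss_pi_gaussianReal m m' hv,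
    pi_gaussianReal_eq_withDensity_pi_gaussianReal m m' hv]
  exact withDensity_exp_apply_le measurable_loss ε hs

lemma mahalanobisDist_mul_le {σ m m' : ι → ℝ} {c Δ ε : ℝ} (hσ : ∀ i, 0 < σ i) (hc : 0 ≤ c)
    (hε : 0 < ε) (hcal : ∀ i, Δ * c / ε ≤ σ i) (hdist : √(∑ i, (m i - m' i) ^ 2) ≤ Δ) :
    mahalanobisDist (fun i => (σ i ^ 2).toNNReal) m m' * c ≤ ε := by
  have hΔ : 0 ≤ Δ := (sqrt_nonneg _).trans hdist
  have sum_le : ∑ i, (m i - m' i) ^ 2 ≤ Δ ^ 2 := (sqrt_le_left hΔ).1 hdist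
  rw [← sq_le_sq₀ (by positivity) hε.le, mul_pow, coe_mahalanobisDist_sq, Finset.sum_mul]
  simp only [coe_toNNReal _ (sq_nonneg _)]
  rcases hΔ.eq_or_lt with rfl | hΔ
  · have eq i : (m i - m' i) ^ 2 = 0 := by
      refine le_antisymm ?_ (sq_nonneg _)
      have := Finset.single_le_sum (fun j _ => sq_nonneg (m j - m' j)) (Finset.mem_univ i)
      linarith
    simpa only [eq, zero_div, zero_mul, Finset.sum_const_zero] using sq_nonneg ε
  have term_le i : (m i - m' i) ^ 2 / σ i ^ 2 * c ^ 2 ≤ (m i - m' i) ^ 2 * (ε / Δ) ^ 2 := by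
    have c_div_le : c / σ i ≤ ε / Δ := by
      rw [div_le_div_iff₀ (hσ i) hΔ, mul_comm c]
      exact (div_le_iff₀' hε).1 (hcal i)
    calc (m i - m' i) ^ 2 / σ i ^ 2 * c ^ 2 = (m i - m' i) ^ 2 * (c / σ i) ^ 2 := by ring
      _ ≤ (m i - m' i) ^ 2 * (ε / Δ) ^ 2 := by have := (hσ i).le; gcongr
  calc ∑ i, (m i - m' i) ^ 2 / σ i ^ 2 * c ^ 2
      ≤ ∑ i, (m i - m' i) ^ 2 * (ε / Δ) ^ 2 := Finset.sum_le_sum fun i _ => term_le i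
    _ ≤ Δ ^ 2 * (ε / Δ) ^ 2 := by rw [← Finset.sum_mul]; gcongr
    _ = ε ^ 2 := by field_simp

end PrivacyLoss

section GaussianTail

variable {m t ε δ L : ℝ} {v d : ℝ≥0}

lemma gaussianReal_Ioi_mean_le (m : ℝ) (v : ℝ≥0) :
    gaussianReal m v (Set.Ioi m) ≤ 2⁻¹ := by
  have reflection : gaussianReal m v (Set.Iio m) = gaussianReal m v (Set.Ioi m) := by
    have map_reflection := gaussianReal_map_const_sub (μ := m) (v := v) (2 * m)
    rw [show 2 * m - m = m by ring] at map_reflection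
    rw [← map_reflection, Measure.map_apply (by fun_prop) measurableSet_Iio, map_reflection]
    congr 1 with x
    simp only [Set.mem_preimage, Set.mem_Iio, Set.mem_Ioi]
    constructor <;> intro h <;> linarith
  rw [ENNReal.le_inv_iff_mul_le, mul_two]
  nth_rw 1 [← reflection]
  rw [← measure_union (Set.Iio_disjoint_Ioi_same) measurableSet_Ioi]
  exact prob_le_one

lemma gaussianReal_Ioi_le_of_mean_le (hv : v ≠ 0) (hmt : m ≤ t) :
    gaussianReal m v (Set.Ioi t) ≤ .ofReal (exp (-((t - m) ^ 2 / (2 * v)))) * 2⁻¹ := by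
  have translation : gaussianReal m v (Set.Ioi t) = gaussianReal (m - (t - m)) v (Set.Ioi m) := by
    rw [← gaussianReal_map_sub_const, Measure.map_apply (by fun_prop) measurableSet_Ioi]
    congr 1 with x
    simp only [Set.mem_preimage, Set.mem_Ioi]
    constructor <;> intro h <;> linarith
  have loss_le : ∀ x ∈ Set.Ioi m,
      gaussianPrivacyLoss v (m - (t - m)) m x ≤ -((t - m) ^ 2 / (2 * v)) := by
    intro x (hx : m < x)
    rw [gaussianPrivacyLoss, ← neg_div]
    gcongr
    nlinarith
  rw [translation, gaussianReal_eq_withDensity_gaussianReal (m - (t - m)) m hv]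
  refine (withDensity_apply_le_mul_of_le measurableSet_Ioi fun x hx =>
    ENNReal.ofReal_le_ofReal (exp_le_exp.2 (loss_le x hx))).trans ?_
  gcongr
  exact gaussianReal_Ioi_mean_le m v

lemma gaussianPDFReal_le (m : ℝ) (v : ℝ≥0) (x : ℝ) : gaussianPDFReal m v x ≤ (√(2 * π * v))⁻¹ :=
  mul_le_of_le_one_right (by positivity) <| exp_le_one_iff.2 <|
    div_nonpos_of_nonpos_of_nonneg (neg_nonpos.2 (sq_nonneg _)) (by positivity)

lemma gaussianReal_Ioi_le_of_le_mean (hv : v ≠ 0) (htm : t ≤ m) :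
    gaussianReal m v (Set.Ioi t) ≤ .ofReal ((√(2 * π * v))⁻¹ * (m - t)) + 2⁻¹ := by
  rw [← Set.Ioc_union_Ioi_eq_Ioi htm]
  refine (measure_union_le _ _).trans (add_le_add ?_ (gaussianReal_Ioi_mean_le m v))
  calc gaussianReal m v (Set.Ioc t m) ≤ .ofReal (√(2 * π * v))⁻¹ * volume (Set.Ioc t m) := by
        rw [gaussianReal_of_var_ne_zero _ hv]
        exact withDensity_apply_le_mul_of_le measurableSet_Ioc fun x _ =>
          ENNReal.ofReal_le_ofReal (gaussianPDFReal_le m v x)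
    _ = .ofReal ((√(2 * π * v))⁻¹ * (m - t)) := by
        rw [Real.volume_Ioc, ENNReal.ofReal_mul (by positivity)]

lemma gaussianReal_half_sq_Ioi_le_of_half_sq_le (hd : d ≠ 0) (hdε : d ^ 2 / 2 ≤ ε) (hε : ε ≤ 1)
    (hcal : d ^ 2 * (2 * L) ≤ ε ^ 2) :
    gaussianReal (d ^ 2 / 2) (d ^ 2) (Set.Ioi ε) ≤ .ofReal (1.25 * exp (-L)) := by
  have exponent_le : -((ε - d ^ 2 / 2) ^ 2 / (2 * d ^ 2)) ≤ -L + 1 / 2 := by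
    rw [neg_le, neg_add, neg_neg, le_div_iff₀ (by positivity)]
    nlinarith
  -- the tail is at most `exp (1 / 2) / 2 * exp (-L)`, and `exp (1 / 2) / 2 < 1.25`
  have exp_half_le : exp (1 / 2) ≤ 2.5 := by
    have sq_exp_half : exp (1 / 2) ^ 2 = exp 1 := by rw [← exp_nat_mul]; norm_num
    nlinarith [exp_one_lt_d9]
  calc gaussianReal (d ^ 2 / 2) (d ^ 2) (Set.Ioi ε)
      ≤ .ofReal (exp (-((ε - d ^ 2 / 2) ^ 2 / (2 * d ^ 2)))) * 2⁻¹ := by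
        simpa only [NNReal.coe_pow] using gaussianReal_Ioi_le_of_mean_le (pow_ne_zero 2 hd) hdε
    _ = .ofReal (exp (-((ε - d ^ 2 / 2) ^ 2 / (2 * d ^ 2))) * 2⁻¹) := by
        rw [ENNReal.ofReal_mul (exp_nonneg _), ENNReal.ofReal_inv_of_pos two_pos,
          ENNReal.ofReal_ofNat]
    _ ≤ .ofReal (1.25 * exp (-L)) := by
        refine ENNReal.ofReal_le_ofReal ?_
        have exp_le := (exp_le_exp.2 exponent_le).trans_eq (exp_add _ _)
        nlinarith [exp_pos (-L)]

lemma gaussianReal_half_sq_Ioi_le_of_lt_half_sq (hε0 : 0 < ε) (hdε : ε < d ^ 2 / 2) (hε1 : ε ≤ 1)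
    (hL : 1 / 5 ≤ L) (hcal : d ^ 2 * (2 * L) ≤ ε ^ 2) :
    gaussianReal (d ^ 2 / 2) (d ^ 2) (Set.Ioi ε) ≤ .ofReal (1.25 * exp (-L)) := by
  have hd : d ≠ 0 := by
    rintro rfl
    norm_num at hdε
    linarith
  -- a mean above `ε` forces `L ≤ 1 / 4`: then `1.25 * exp (-L)` is large and a crude bound works
  have four_mul_L_le : 4 * L ≤ ε := by nlinarith
  have gap_le : d ^ 2 / 2 - ε ≤ 1 / 4 := by nlinarith
  have one_le_normalization : 1 ≤ √(2 * π * (d ^ 2 : ℝ≥0)) := by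
    rw [one_le_sqrt]
    push_cast
    nlinarith [pi_gt_three]
  have three_quarters_le : 3 / 4 ≤ 1.25 * exp (-L) := by linarith [add_one_le_exp (-L)]
  calc gaussianReal (d ^ 2 / 2) (d ^ 2) (Set.Ioi ε)
      ≤ .ofReal ((√(2 * π * (d ^ 2 : ℝ≥0)))⁻¹ * (d ^ 2 / 2 - ε)) + 2⁻¹ :=
        gaussianReal_Ioi_le_of_le_mean (pow_ne_zero 2 hd) hdε.le
    _ ≤ .ofReal (1 / 4) + .ofReal (1 / 2) := by
        gcongr
        · exact (mul_le_of_le_one_left (sub_nonneg.2 hdε.le)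
            (inv_le_one_of_one_le₀ one_le_normalization)).trans gap_le
        · rw [one_div, ENNReal.ofReal_inv_of_pos two_pos, ENNReal.ofReal_ofNat]
    _ = .ofReal (3 / 4) := by rw [← ENNReal.ofReal_add] <;> norm_num
    _ ≤ .ofReal (1.25 * exp (-L)) := ENNReal.ofReal_le_ofReal three_quarters_le

lemma gaussianReal_half_sq_Ioi_le (hε : ε ≤ 1) (hδ0 : 0 < δ) (hδ1 : δ ≤ 1)
    (hcal : d * √(2 * log (1.25 / δ)) ≤ ε) :
    gaussianReal (d ^ 2 / 2) (d ^ 2) (Set.Ioi ε) ≤ .ofReal δ := by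
  have one_fifth_le_log : 1 / 5 ≤ log (1.25 / δ) := by
    have := one_sub_inv_le_log_of_pos (x := 1.25 / δ) (by positivity)
    rw [inv_div] at this
    norm_num at this
    linarith
  have hδ : δ = 1.25 * exp (-log (1.25 / δ)) := by
    rw [exp_neg, exp_log (by positivity)]
    field_simp
  have hε0 : 0 ≤ ε := le_trans (by positivity) hcal
  have hcal_sq : d ^ 2 * (2 * log (1.25 / δ)) ≤ ε ^ 2 := by
    rw [← sq_sqrt (show 0 ≤ 2 * log (1.25 / δ) by linarith), ← mul_pow]
    exact pow_le_pow_left₀ (by positivity) hcal 2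
  rcases eq_or_ne d 0 with rfl | hd
  · simp [hε0.not_gt]
  rw [hδ]
  rcases le_or_gt (d ^ 2 / 2 : ℝ) ε with hdε | hdε
  · exact gaussianReal_half_sq_Ioi_le_of_half_sq_le hd hdε hε hcal_sq
  · have hε_pos : 0 < ε :=
      (mul_pos (NNReal.coe_pos.2 hd.bot_lt) (sqrt_pos.2 (by linarith))).trans_le hcal
    exact gaussianReal_half_sq_Ioi_le_of_lt_half_sq hε_pos hdε hε one_fifth_le_log hcal_sq

end GaussianTail

theorem gaussian_mechanism_multivariate_general {ι : Type*} [Fintype ι] {ε δ : ℝ} (hε : ε ≤ 1)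
    (hδ0 : 0 < δ) (hδ1 : δ ≤ 1) {v : ι → ℝ≥0} (hv : ∀ i, v i ≠ 0) {a a' : ι → ℝ}
    (hcal : mahalanobisDist v a a' * √(2 * log (1.25 / δ)) ≤ ε) {s : Set (ι → ℝ)}
    (hs : MeasurableSet s) :
    (Measure.pi fun i => gaussianReal 0 (v i)).map (fun x => a + x) s
      ≤ .ofReal (exp ε) * (Measure.pi fun i => gaussianReal 0 (v i)).map (fun x => a' + x) s
        + .ofReal δ := by
  rw [map_const_add_pi_gaussianReal, map_const_add_pi_gaussianReal]
  simp only [zero_add]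
  exact (pi_gaussianReal_apply_le a a' hv ε hs).trans
    (add_le_add_right (gaussianReal_half_sq_Ioi_le hε hδ0 hδ1 hcal) _)

/-- Multivariate Gaussian mechanism with per-coordinate noise levels: on inputs that are
adjacent in the `L₂` sense (distance at most `Δ`), the translated product-Gaussian output
distributions are `(ε, δ)`-indistinguishable. -/
theorem gaussian_mechanism_multivariate
    (n : ℕ) (hn : 1 ≤ n)
    (ε δ Δ : ℝ) (hε : ε ∈ Set.Ioo (0 : ℝ) 1) (hδ : δ ∈ Set.Ioo (0 : ℝ) 1)
    (hΔ : 0 ≤ Δ)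
    (σ : Fin n → ℝ) (hσ : ∀ ℓ, 0 < σ ℓ)
    (hcal : ∀ ℓ, σ ℓ ≥ Δ * Real.sqrt (2 * Real.log (1.25 / δ)) / ε)
    (a a' : Fin n → ℝ)
    (hadj : Real.sqrt (∑ ℓ, (a ℓ - a' ℓ) ^ 2) ≤ Δ)
    (s : Set (Fin n → ℝ)) (hs : MeasurableSet s) :
    Measure.map (fun x => a + x)
        (Measure.pi (fun ℓ => gaussianReal 0 ((σ ℓ) ^ 2).toNNReal)) s
      ≤ ENNReal.ofReal (Real.exp ε) *
          Measure.map (fun x => a' + x)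
            (Measure.pi (fun ℓ => gaussianReal 0 ((σ ℓ) ^ 2).toNNReal)) s
        + ENNReal.ofReal δ := by
  exact gaussian_mechanism_multivariate_general hε.2.le hδ.1 hδ.2.le
    (fun ℓ => (toNNReal_pos.2 (pow_pos (hσ ℓ) 2)).ne')
    (mahalanobisDist_mul_le hσ (sqrt_nonneg _) hε.1 hcal hadj) hs
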